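/- arXiv:math/0406201 — 2 statements merged into one kernel-verified Lean document; each statement's English description precedes it below -/
import Mathlib

section
/- There exist a₀ ∈ (0, 1/(2π)) and a constant c < 1 such that for every a ∈ (0, a₀) and every continuously differentiable 1-periodic function q : ℝ → ℝ with ∫₀¹ q(x) dx = 0, one has max( sup_{x ∈ [0,1]} |(T_a q)(x)|, sup_{x ∈ [0,1]} |(T_a q)'(x)| ) ≤ c · max( sup_{x ∈ [0,1]} |q(x)|, sup_{x ∈ [0,1]} |q'(x)| ). -/
/-!
Differentiating one inverse branch of the transfer operator gives `q' / F'² - q F'' / F'³`. If `q`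
has mean zero, then `|q| ≤ sup |q'| / 2`, because `q` vanishes within half a period of any point.
So if the degree is `k`, `F' ≥ m` and `|F''| ≤ s`, then `|T q|` and `|(T q)'|` are at most
`k / (2m)` and `k (1/m² + s/(2m³))` times `sup |q'|`. When `F` tends to `x ↦ k x` in `C²`, with
`k ≥ 2`, one has `m → k` and `s → 0`, and these factors tend to `1/2` and `1/k ≤ 1/2`.
-/

open Filter Function Set Topology

section Periodic

variable {q : ℝ → ℝ} {T : ℝ}

theorem periodic_deriv (hp : Periodic q T) : Periodic (deriv q) T := fun x => by
  rw [← deriv_comp_add_const, funext hp]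

theorem exists_abs_le_of_continuous_of_periodic (hq : Continuous q) (hp : Periodic q T)
    (hT : T ≠ 0) : ∃ C, ∀ x, |q x| ≤ C := by
  obtain ⟨C, hC⟩ := (hp.isBounded_of_continuous hT hq).exists_norm_le
  exact ⟨C, fun x => hC _ (mem_range_self x)⟩

theorem abs_le_sSup_image_abs_Icc (hq : Continuous q) (hp : Periodic q T) (hT : 0 < T) (x : ℝ) :
    |q x| ≤ sSup ((fun x => |q x|) '' Icc 0 T) := by
  obtain ⟨y, hy, hxy⟩ := hp.exists_mem_Ico₀ hT x
  rw [hxy]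
  exact le_csSup (isCompact_Icc.image hq.abs).bddAbove ⟨y, Ico_subset_Icc_self hy, rfl⟩

theorem abs_le_of_periodic_of_integral_eq_zero {D : ℝ} (hq : Differentiable ℝ q)
    (hp : Periodic q T) (hT : 0 < T) (h0 : ∫ x in (0 : ℝ)..T, q x = 0)
    (hD : ∀ x, |deriv q x| ≤ D) (x : ℝ) : |q x| ≤ D * (T / 2) := by
  obtain ⟨z, -, hz⟩ := exists_eq_interval_average hT.ne hq.continuous.continuousOn
  rw [interval_average_eq, h0, smul_zero] at hz
  obtain ⟨y, hy, hxy⟩ := hp.exists_mem_Ico hT x (z - T / 2)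
  have hyz : |y - z| ≤ T / 2 := abs_le.2 ⟨by linarith [hy.1], by linarith [hy.2]⟩
  calc |q x| = |q y - q z| := by rw [hxy, hz, sub_zero]
    _ ≤ D * |y - z| := convex_univ.norm_image_sub_le_of_norm_deriv_le (fun t _ => hq t)
        (fun t _ => hD t) (mem_univ z) (mem_univ y)
    _ ≤ D * (T / 2) := mul_le_mul_of_nonneg_left hyz ((abs_nonneg _).trans (hD 0))

end Periodic

/-- The transfer (Perron–Frobenius) operator `T` of the degree `k` circle map with lift `F`. Its `k`
inverse branches are the functions `x ↦ φ (x + i)` with `i < k`, where `φ` is the inverse of `F`. -/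
noncomputable def transferOperator (k : ℕ) (F φ q : ℝ → ℝ) (x : ℝ) : ℝ :=
  ∑ i ∈ Finset.range k, q (φ (x + i)) / deriv F (φ (x + i))

/-- The `C¹` norm `‖q‖_B` of a `1`-periodic function, its suprema being taken over `[0, 1]`. -/
noncomputable def c1Norm (q : ℝ → ℝ) : ℝ :=
  max (sSup ((fun x => |q x|) '' Icc (0 : ℝ) 1)) (sSup ((fun x => |deriv q x|) '' Icc (0 : ℝ) 1))

theorem c1Norm_le {q : ℝ → ℝ} {C : ℝ} (hq : ∀ x, |q x| ≤ C) (hq' : ∀ x, |deriv q x| ≤ C) :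
    c1Norm q ≤ C := by
  have hne : (Icc (0 : ℝ) 1).Nonempty := nonempty_Icc.2 zero_le_one
  exact max_le (csSup_le (hne.image _) (forall_mem_image.2 fun x _ => hq x))
    (csSup_le (hne.image _) (forall_mem_image.2 fun x _ => hq' x))

theorem abs_deriv_le_c1Norm {q : ℝ → ℝ} (hq : ContDiff ℝ 1 q) (hp : Periodic q 1) (x : ℝ) :
    |deriv q x| ≤ c1Norm q :=
  (abs_le_sSup_image_abs_Icc (hq.continuous_deriv le_rfl) (periodic_deriv hp) one_pos x).trans
    (le_max_right _ _)

/-- A bound for the norm of the transfer operator on mean-zero functions, for a degree `k` circle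
map whose lift `F` satisfies `F' ≥ m` and `|F''| ≤ s`. -/
noncomputable def contractionBound (k : ℕ) (m s : ℝ) : ℝ :=
  max (k * (1 / 2 / m)) (k * (1 / m ^ 2 + 1 / 2 * s / m ^ 3))

section TransferOperator

variable {F φ q : ℝ → ℝ}

theorem hasDerivAt_of_rightInverse (hF : ∀ x, 0 < deriv F x) (hφ : RightInverse φ F) (x : ℝ) :
    HasDerivAt φ (deriv F (φ x))⁻¹ x := by
  have hcont : Continuous φ :=
    ((strictMono_of_deriv_pos hF).orderIsoOfRightInverse F φ hφ).symm.continuous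
  have hne : deriv F (φ x) ≠ 0 := (hF _).ne'
  exact (differentiableAt_of_deriv_ne_zero hne).hasDerivAt.of_local_left_inverse
    hcont.continuousAt hne (.of_forall hφ)

theorem hasDerivAt_div_deriv_comp_rightInverse (hF : ∀ x, 0 < deriv F x)
    (hF' : Differentiable ℝ (deriv F)) (hφ : RightInverse φ F) (hq : Differentiable ℝ q) (x : ℝ) :
    HasDerivAt (fun x => q (φ x) / deriv F (φ x))
      (deriv q (φ x) / deriv F (φ x) ^ 2 -
        q (φ x) * deriv (deriv F) (φ x) / deriv F (φ x) ^ 3) x := by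
  have hne : deriv F (φ x) ≠ 0 := (hF _).ne'
  have hφ' := hasDerivAt_of_rightInverse hF hφ x
  refine (((hq _).hasDerivAt.comp x hφ').div ((hF' _).hasDerivAt.comp x hφ') hne).congr_deriv ?_
  simp only [comp_apply]
  field_simp

theorem deriv_transferOperator (k : ℕ) (hF : ∀ x, 0 < deriv F x)
    (hF' : Differentiable ℝ (deriv F)) (hφ : RightInverse φ F) (hq : Differentiable ℝ q) (x : ℝ) :
    deriv (transferOperator k F φ q) x = ∑ i ∈ Finset.range k,
      (deriv q (φ (x + i)) / deriv F (φ (x + i)) ^ 2 -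
        q (φ (x + i)) * deriv (deriv F) (φ (x + i)) / deriv F (φ (x + i)) ^ 3) :=
  (HasDerivAt.fun_sum (u := Finset.range k) fun i _ =>
    (hasDerivAt_div_deriv_comp_rightInverse hF hF' hφ hq (x + i)).comp_add_const x (i : ℝ)).deriv

theorem abs_sum_range_le_mul {f : ℕ → ℝ} {C : ℝ} (hf : ∀ i, |f i| ≤ C) (k : ℕ) :
    |∑ i ∈ Finset.range k, f i| ≤ k * C := by
  simpa using norm_sum_le_of_le (f := f) (n := fun _ => C) (Finset.range k) fun i _ => hf i

variable {m s M D : ℝ}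

theorem abs_transferOperator_le (k : ℕ) (hm : 0 < m) (hF : ∀ x, m ≤ deriv F x)
    (hq : ∀ x, |q x| ≤ M) (x : ℝ) : |transferOperator k F φ q x| ≤ k * (M / m) := by
  have hM : 0 ≤ M := (abs_nonneg _).trans (hq 0)
  refine abs_sum_range_le_mul (fun i => ?_) k
  rw [abs_div, abs_of_pos (hm.trans_le (hF _))]
  exact div_le_div₀ hM (hq _) hm (hF _)

theorem abs_deriv_transferOperator_le (k : ℕ) (hm : 0 < m) (hF : ∀ x, m ≤ deriv F x)
    (hF' : Differentiable ℝ (deriv F)) (hs : ∀ x, |deriv (deriv F) x| ≤ s)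
    (hφ : RightInverse φ F) (hqd : Differentiable ℝ q) (hq : ∀ x, |q x| ≤ M)
    (hq' : ∀ x, |deriv q x| ≤ D) (x : ℝ) :
    |deriv (transferOperator k F φ q) x| ≤ k * (D / m ^ 2 + M * s / m ^ 3) := by
  have hM : 0 ≤ M := (abs_nonneg _).trans (hq 0)
  have hD : 0 ≤ D := (abs_nonneg _).trans (hq' 0)
  have hs0 : 0 ≤ s := (abs_nonneg _).trans (hs 0)
  have hpos : ∀ x, 0 < deriv F x := fun x => hm.trans_le (hF x)
  rw [deriv_transferOperator k hpos hF' hφ hqd]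
  refine abs_sum_range_le_mul (fun i => (abs_sub _ _).trans ?_) k
  rw [abs_div, abs_div, abs_mul, abs_pow, abs_pow, abs_of_pos (hpos _)]
  gcongr <;> apply_assumption

theorem c1Norm_transferOperator_le (k : ℕ) (hm : 0 < m) (hF : ∀ x, m ≤ deriv F x)
    (hF' : Differentiable ℝ (deriv F)) (hs : ∀ x, |deriv (deriv F) x| ≤ s)
    (hφ : RightInverse φ F) (hq : ContDiff ℝ 1 q) (hp : Periodic q 1)
    (h0 : ∫ x in (0 : ℝ)..1, q x = 0) :
    c1Norm (transferOperator k F φ q) ≤ contractionBound k m s * c1Norm q := by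
  have hqd : Differentiable ℝ q := hq.differentiable one_ne_zero
  have hD : ∀ x, |deriv q x| ≤ c1Norm q := abs_deriv_le_c1Norm hq hp
  have hD0 : 0 ≤ c1Norm q := (abs_nonneg _).trans (hD 0)
  have hM : ∀ x, |q x| ≤ c1Norm q * (1 / 2) :=
    abs_le_of_periodic_of_integral_eq_zero hqd hp one_pos h0 hD
  refine c1Norm_le (fun x => ?_) fun x => ?_
  · calc |transferOperator k F φ q x| ≤ k * (c1Norm q * (1 / 2) / m) :=
          abs_transferOperator_le k hm hF hM x
      _ = k * (1 / 2 / m) * c1Norm q := by ring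
      _ ≤ contractionBound k m s * c1Norm q :=
          mul_le_mul_of_nonneg_right (le_max_left _ _) hD0
  · calc |deriv (transferOperator k F φ q) x|
        ≤ k * (c1Norm q / m ^ 2 + c1Norm q * (1 / 2) * s / m ^ 3) :=
          abs_deriv_transferOperator_le k hm hF hF' hs hφ hqd hM hD x
      _ = k * (1 / m ^ 2 + 1 / 2 * s / m ^ 3) * c1Norm q := by ring
      _ ≤ contractionBound k m s * c1Norm q :=
          mul_le_mul_of_nonneg_right (le_max_right _ _) hD0

end TransferOperator

theorem contractionBound_natCast_zero {k : ℕ} (hk : 2 ≤ k) : contractionBound k k 0 = 1 / 2 := by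
  have hk' : (2 : ℝ) ≤ k := by exact_mod_cast hk
  have hk0 : (k : ℝ) ≠ 0 := by positivity
  have hleft : (k : ℝ) * (1 / 2 / k) = 1 / 2 := by field_simp
  have hright : (k : ℝ) * (1 / (k : ℝ) ^ 2 + 1 / 2 * 0 / (k : ℝ) ^ 3) = 1 / k := by
    field_simp
    simp
  rw [contractionBound, hleft, hright]
  exact max_eq_left (one_div_le_one_div_of_le two_pos hk')

theorem tendsto_contractionBound {k : ℕ} (hk : 2 ≤ k) (A B : ℝ) :
    Tendsto (fun a : ℝ => contractionBound k (k - |a| * A) (|a| * B)) (𝓝 0) (𝓝 (1 / 2)) := by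
  have hcont : ContinuousAt (fun a : ℝ => contractionBound k (k - |a| * A) (|a| * B)) 0 := by
    have hk0 : (k : ℝ) - |0| * A ≠ 0 := by
      simp only [abs_zero, zero_mul, sub_zero, ne_eq, Nat.cast_eq_zero]
      omega
    unfold contractionBound
    fun_prop (disch := simpa using hk0)
  simpa [contractionBound_natCast_zero hk] using hcont.tendsto

theorem deriv_mul_add_mul {g : ℝ → ℝ} (hg : Differentiable ℝ g) (k a : ℝ) :
    deriv (fun x => k * x + a * g x) = fun x => k + a * deriv g x := by
  funext x
  exact ((hasDerivAt_const_mul k).fun_add ((hg x).hasDerivAt.const_mul a)).deriv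

theorem sub_le_deriv_mul_add_mul {g : ℝ → ℝ} {A : ℝ} (hg : Differentiable ℝ g)
    (hA : ∀ x, |deriv g x| ≤ A) (k a x : ℝ) :
    k - |a| * A ≤ deriv (fun x => k * x + a * g x) x := by
  have h : |a * deriv g x| ≤ |a| * A := by
    rw [abs_mul]
    exact mul_le_mul_of_nonneg_left (hA x) (abs_nonneg a)
  rw [deriv_mul_add_mul hg]
  linarith [neg_abs_le (a * deriv g x)]

theorem abs_deriv_deriv_mul_add_mul_le {g : ℝ → ℝ} {B : ℝ} (hg : Differentiable ℝ g)
    (hB : ∀ x, |deriv (deriv g) x| ≤ B) (k a x : ℝ) :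
    |deriv (deriv fun x => k * x + a * g x) x| ≤ |a| * B := by
  rw [deriv_mul_add_mul hg, deriv_const_add', deriv_const_mul_field', abs_mul]
  exact mul_le_mul_of_nonneg_left (hB x) (abs_nonneg a)

theorem exists_mem_Ioo_forall_of_eventually_nhdsGT {α : Type*} [TopologicalSpace α]
    [LinearOrder α] [OrderTopology α] [DenselyOrdered α] {p : α → Prop} {a b : α}
    (h : ∀ᶠ x in 𝓝[>] a, p x) (hab : a < b) : ∃ u ∈ Ioo a b, ∀ x ∈ Ioo a u, p x := by
  obtain ⟨v, hav, hvb⟩ := exists_between hab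
  obtain ⟨u, hu, hsub⟩ := (mem_nhdsGT_iff_exists_mem_Ioc_Ioo_subset hav).1 h
  exact ⟨u, ⟨hu.1, hu.2.trans_lt hvb⟩, hsub⟩

theorem stmt10_general {k : ℕ} (hk : 2 ≤ k) {g : ℝ → ℝ} (hg : ContDiff ℝ 2 g)
    (hgp : Periodic g 1) {c : ℝ} (hc : 1 / 2 < c) :
    ∀ᶠ a in 𝓝 (0 : ℝ), ∀ φ : ℝ → ℝ, RightInverse φ (fun x => k * x + a * g x) →
      ∀ q : ℝ → ℝ, ContDiff ℝ 1 q → Periodic q 1 → ∫ x in (0 : ℝ)..1, q x = 0 →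
        c1Norm (transferOperator k (fun x => k * x + a * g x) φ q) ≤ c * c1Norm q := by
  have hgd : Differentiable ℝ g := hg.differentiable two_ne_zero
  have hg' : ContDiff ℝ 1 (deriv g) := hg.deriv'
  obtain ⟨A, hA⟩ := exists_abs_le_of_continuous_of_periodic hg'.continuous
    (periodic_deriv hgp) one_ne_zero
  obtain ⟨B, hB⟩ := exists_abs_le_of_continuous_of_periodic (hg'.continuous_deriv le_rfl)
    (periodic_deriv (periodic_deriv hgp)) one_ne_zero
  have hpos : ∀ᶠ a in 𝓝 (0 : ℝ), 0 < k - |a| * A := by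
    have hcont : ContinuousAt (fun a : ℝ => k - |a| * A) 0 := by fun_prop
    refine hcont.eventually_const_lt ?_
    simpa using two_pos.trans_le hk
  filter_upwards [hpos, (tendsto_contractionBound hk A B).eventually_lt_const hc]
    with a hm hlt φ hφ q hq hp h0
  have hF' : Differentiable ℝ (deriv fun x => k * x + a * g x) := by
    rw [deriv_mul_add_mul hgd]
    exact ((hg'.differentiable one_ne_zero).const_mul a).const_add _
  have hq0 : 0 ≤ c1Norm q := (abs_nonneg _).trans (abs_deriv_le_c1Norm hq hp 0)
  calc c1Norm (transferOperator k (fun x => k * x + a * g x) φ q)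
      ≤ contractionBound k (k - |a| * A) (|a| * B) * c1Norm q :=
        c1Norm_transferOperator_le k hm (sub_le_deriv_mul_add_mul hgd hA k a) hF'
          (abs_deriv_deriv_mul_add_mul_le hgd hB k a) hφ hq hp h0
    _ ≤ c * c1Norm q := mul_le_mul_of_nonneg_right hlt.le hq0

theorem transferOperator_two (F φ q : ℝ → ℝ) :
    transferOperator 2 F φ q =
      fun x => q (φ x) / deriv F (φ x) + q (φ (x + 1)) / deriv F (φ (x + 1)) := by
  funext x
  simp [transferOperator, Finset.sum_range_succ]

theorem periodic_sin_two_pi_mul : Periodic (fun x : ℝ => Real.sin (2 * Real.pi * x)) 1 :=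
  fun x => by simp only [mul_add, mul_one, Real.sin_add_two_pi]

/-- `‖T_a‖_{B₀} < 1` for small `a`: there are `a₀` and `c < 1` such that for all
`a ∈ (0, a₀)` and every mean-zero `C¹` 1-periodic `q`,
`max(sup |T_a q|, sup |(T_a q)'|) ≤ c · max(sup |q|, sup |q'|)` on `[0,1]`. -/
theorem stmt10 :
    ∃ a₀ ∈ Set.Ioo (0:ℝ) (1/(2*Real.pi)), ∃ c : ℝ, c < 1 ∧
    ∀ a ∈ Set.Ioo (0:ℝ) a₀,
    ∀ φ : ℝ → ℝ,
      (∀ x : ℝ, 2*(φ x) + a*Real.sin (2*Real.pi*(φ x)) = x) →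
      (∀ x : ℝ, φ (2*x + a*Real.sin (2*Real.pi*x)) = x) →
    ∀ q : ℝ → ℝ, ContDiff ℝ 1 q → Function.Periodic q 1 →
      (∫ x in (0:ℝ)..1, q x) = 0 →
      let F : ℝ → ℝ := fun x => 2*x + a*Real.sin (2*Real.pi*x)
      let Tq : ℝ → ℝ := fun x => q (φ x) / deriv F (φ x) + q (φ (x+1)) / deriv F (φ (x+1))
      max (sSup ((fun x => |Tq x|) '' Set.Icc (0:ℝ) 1))
          (sSup ((fun x => |deriv Tq x|) '' Set.Icc (0:ℝ) 1)) ≤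
        c * max (sSup ((fun x => |q x|) '' Set.Icc (0:ℝ) 1))
                (sSup ((fun x => |deriv q x|) '' Set.Icc (0:ℝ) 1)) := by
  obtain ⟨a₀, ha₀, h⟩ := exists_mem_Ioo_forall_of_eventually_nhdsGT (nhdsWithin_le_nhds <|
    stmt10_general le_rfl (by fun_prop) periodic_sin_two_pi_mul (by norm_num : 1 / 2 < (3 / 4 : ℝ)))
    (one_div_pos.2 Real.two_pi_pos)
  exact ⟨a₀, ha₀, 3 / 4, by norm_num, fun a ha φ hφ _ q hq hp h0 => by
    simpa only [c1Norm, transferOperator_two, Nat.cast_ofNat] using h a ha φ hφ q hq hp h0⟩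
end

section
/- Let α ∈ (0, 1) and define h : ℝ → ℝ by h(x) = x^{−α} for x ∈ (0, 1] and h(x) = 0 otherwise; for ε > 0 define (G_ε h)(x) = (1/(2ε)) ∫_{x−ε}^{x+ε} h(y) dy. Then there exist constants c₁ > 0, c₂ > 0 and ε₀ > 0 such that for all ε ∈ (0, ε₀), c₁ ε^{1−α} ≤ ∫_ℝ |(G_ε h)(x) − h(x)| dx ≤ c₂ ε^{1−α}. -/
/-
Since `G_ε f - f` is the average of the increments `f (t + ·) - f` over `|t| ≤ ε`, its `L¹` norm is
at most the average of `‖f (t + ·) - f‖₁`. If `f` is carried by `(0, ∞)` and decreasing there, the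
increment by `t ≥ 0` is positive only on `(-t, 0]` and has total integral `0`, so its `L¹` norm is
exactly `2 ∫₀ᵗ f`. Conversely, `f` vanishes on `(-ε, 0]` while `G_ε f` equals `(2ε)⁻¹ ∫₀^{x + ε} f`
there, and the means of a decreasing function decrease. Hence `‖G_ε f - f‖₁` is comparable to the
mass `∫₀^ε f` near the singularity, which is `ε^{1-α} / (1 - α)` for the truncated power.
-/

open MeasureTheory Set

section MovingAverage

variable {E : Type*} [NormedAddCommGroup E] {f : ℝ → E} {ε : ℝ}

lemma integrable_increment_prod (hf : Integrable f) (μ : Measure ℝ) [IsFiniteMeasure μ] :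
    Integrable (fun p : ℝ × ℝ => f (p.1 + p.2) - f p.2) (μ.prod volume) :=
  ((measurePreserving_prod_add μ volume).integrable_comp_of_integrable (hf.comp_snd μ)).sub
    (hf.comp_snd μ)

variable [NormedSpace ℝ E]

/-- The averaging operator `G_ε`: convolution with the uniform probability density on `[-ε, ε]`. -/
noncomputable def movingAverage (ε : ℝ) (f : ℝ → E) (x : ℝ) : E :=
  (1 / (2 * ε)) • ∫ y in (x - ε)..(x + ε), f y

variable [CompleteSpace E]

lemma movingAverage_sub_eq_smul_integral (hε : ε ≠ 0) {x : ℝ}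
    (hf : IntervalIntegrable f volume (x - ε) (x + ε)) :
    movingAverage ε f x - f x = (1 / (2 * ε)) • ∫ t in (-ε)..ε, (f (t + x) - f x) := by
  have hshift : IntervalIntegrable (fun t => f (t + x)) volume (-ε) ε := by
    convert hf.comp_add_right x using 1 <;> ring
  rw [intervalIntegral.integral_sub hshift intervalIntegrable_const,
    intervalIntegral.integral_comp_add_right, intervalIntegral.integral_const, smul_sub, smul_smul,
    show 1 / (2 * ε) * (ε - -ε) = 1 by field_simp; ring, one_smul, movingAverage,
    neg_add_eq_sub, add_comm ε x]

lemma integrable_movingAverage_sub (hε : 0 < ε) (hf : Integrable f) :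
    Integrable fun x => movingAverage ε f x - f x := by
  simp_rw [fun x => movingAverage_sub_eq_smul_integral hε.ne' (x := x) hf.intervalIntegrable,
    intervalIntegral.integral_of_le (neg_le_self hε.le)]
  exact (integrable_increment_prod hf _).integral_prod_right.smul _

lemma integral_norm_movingAverage_sub_le (hε : 0 < ε) (hf : Integrable f) :
    ∫ x, ‖movingAverage ε f x - f x‖ ≤
      1 / (2 * ε) * ∫ t in (-ε)..ε, ∫ x, ‖f (t + x) - f x‖ := by
  have hle : -ε ≤ ε := neg_le_self hε.le
  have hprod := (integrable_increment_prod hf (volume.restrict (Ioc (-ε) ε))).norm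
  have hpointwise (x : ℝ) : ‖movingAverage ε f x - f x‖ ≤
      1 / (2 * ε) * ∫ t in Ioc (-ε) ε, ‖f (t + x) - f x‖ := by
    rw [movingAverage_sub_eq_smul_integral hε.ne' hf.intervalIntegrable, norm_smul,
      Real.norm_of_nonneg (by positivity), intervalIntegral.integral_of_le hle]
    gcongr
    exact norm_integral_le_integral_norm _
  calc ∫ x, ‖movingAverage ε f x - f x‖
      ≤ ∫ x, 1 / (2 * ε) * ∫ t in Ioc (-ε) ε, ‖f (t + x) - f x‖ :=
        integral_mono (integrable_movingAverage_sub hε hf).norm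
          (hprod.integral_prod_right.const_mul _) hpointwise
    _ = 1 / (2 * ε) * ∫ t in (-ε)..ε, ∫ x, ‖f (t + x) - f x‖ := by
        rw [integral_const_mul, intervalIntegral.integral_of_le hle,
          ← integral_integral_swap hprod]

lemma integral_norm_movingAverage_sub_le_of_forall (hε : 0 < ε) (hf : Integrable f) {C : ℝ}
    (hC : ∀ t ∈ Icc (-ε) ε, ∫ x, ‖f (t + x) - f x‖ ≤ C) :
    ∫ x, ‖movingAverage ε f x - f x‖ ≤ C := by
  have hle : -ε ≤ ε := neg_le_self hε.le
  have hint : IntervalIntegrable (fun t => ∫ x, ‖f (t + x) - f x‖) volume (-ε) ε :=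
    (intervalIntegrable_iff_integrableOn_Ioc_of_le hle).2
      (integrable_increment_prod hf _).norm.integral_prod_left
  calc ∫ x, ‖movingAverage ε f x - f x‖
      ≤ 1 / (2 * ε) * ∫ t in (-ε)..ε, ∫ x, ‖f (t + x) - f x‖ :=
        integral_norm_movingAverage_sub_le hε hf
    _ ≤ 1 / (2 * ε) * ∫ _ in (-ε)..ε, C := by
        gcongr
        exact intervalIntegral.integral_mono_on hle hint intervalIntegrable_const hC
    _ = C := by
        rw [intervalIntegral.integral_const, smul_eq_mul]
        field_simp
        ring

end MovingAverage

lemma mul_integral_le_mul_integral_of_antitoneOn {f : ℝ → ℝ} {s t : ℝ}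
    (hf : AntitoneOn f (Ioo 0 t)) (hint : IntervalIntegrable f volume 0 t) (hs : 0 < s)
    (hst : s ≤ t) : s * ∫ y in 0..t, f y ≤ t * ∫ y in 0..s, f y := by
  have ht : 0 < t := hs.trans_le hst
  have hscale {r : ℝ} (hr : 0 < r) : ∫ u in 0..1, f (r * u) = r⁻¹ * ∫ y in 0..r, f y := by
    simp [intervalIntegral.integral_comp_mul_left f hr.ne']
  have hint' {r : ℝ} (hr : 0 < r) (hrt : r ≤ t) :
      IntervalIntegrable (fun u => f (r * u)) volume 0 1 := by
    have hsub : IntervalIntegrable f volume 0 r := hint.mono_set (by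
      rw [uIcc_of_le hr.le, uIcc_of_le ht.le]
      exact Icc_subset_Icc_right hrt)
    simpa [hr.ne'] using hsub.comp_mul_left (c := r)
  have hmono : ∫ u in 0..1, f (t * u) ≤ ∫ u in 0..1, f (s * u) := by
    refine intervalIntegral.integral_mono_on_of_le_Ioo zero_le_one (hint' ht le_rfl)
      (hint' hs hst) fun u hu => ?_
    exact hf ⟨mul_pos hs hu.1, (mul_lt_of_lt_one_right hs hu.2).trans_le hst⟩
      ⟨mul_pos ht hu.1, mul_lt_of_lt_one_right ht hu.2⟩ (mul_le_mul_of_nonneg_right hst hu.1.le)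
  rwa [hscale ht, hscale hs, inv_mul_le_iff₀ ht, mul_left_comm, le_inv_mul_iff₀ hs] at hmono

/-- An integrable density, not necessarily normalised, that is carried by `(0, ∞)` and decreasing
there. It may be unbounded at `0`, which is the singularity smoothed out by `movingAverage`. -/
structure IsDecreasingDensity (f : ℝ → ℝ) : Prop where
  integrable : Integrable f
  nonneg : ∀ x, 0 ≤ f x
  eq_zero_of_nonpos : ∀ x ≤ 0, f x = 0
  antitoneOn : AntitoneOn f (Ioi 0)

namespace IsDecreasingDensity

variable {f : ℝ → ℝ} {ε t x : ℝ}

lemma setIntegral_Iic_of_nonpos (hf : IsDecreasingDensity f) (ht : t ≤ 0) :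
    ∫ y in Iic t, f y = 0 :=
  setIntegral_eq_zero_of_forall_eq_zero fun y hy => hf.eq_zero_of_nonpos y (le_trans hy ht)

lemma intervalIntegral_eq_setIntegral_Iic (hf : IsDecreasingDensity f) {a : ℝ} (ha : a ≤ 0)
    (t : ℝ) : ∫ y in a..t, f y = ∫ y in Iic t, f y := by
  rw [← intervalIntegral.integral_Iic_sub_Iic hf.integrable.integrableOn
    hf.integrable.integrableOn, hf.setIntegral_Iic_of_nonpos ha, sub_zero]

lemma abs_increment_eq (hf : IsDecreasingDensity f) (ht : 0 ≤ t) (x : ℝ) :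
    |f (t + x) - f x| = f x - f (t + x) + 2 * (Iic 0).indicator (fun y => f (t + y)) x := by
  rcases le_or_gt x 0 with hx | hx
  · rw [indicator_of_mem (mem_Iic.2 hx), hf.eq_zero_of_nonpos x hx, sub_zero,
      abs_of_nonneg (hf.nonneg _)]
    ring
  · have hle : f (t + x) ≤ f x := hf.antitoneOn hx (add_pos_of_nonneg_of_pos ht hx) (by linarith)
    rw [indicator_of_notMem (notMem_Iic.2 hx), abs_of_nonpos (sub_nonpos.2 hle)]
    ring

lemma integral_abs_increment_of_nonneg (hf : IsDecreasingDensity f) (ht : 0 ≤ t) :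
    ∫ x, |f (t + x) - f x| = 2 * ∫ y in 0..t, f y := by
  have hshift : Integrable fun x => f (t + x) := hf.integrable.comp_add_left t
  have hdiff : Integrable fun x => f x - f (t + x) := hf.integrable.sub hshift
  have hmass : ∫ x in Iic 0, f (t + x) = ∫ y in 0..t, f y := by
    rw [hf.intervalIntegral_eq_setIntegral_Iic le_rfl,
      ← (measurePreserving_add_left volume t).setIntegral_preimage_emb
        (measurableEmbedding_addLeft t) f, preimage_const_add_Iic, sub_self]
  calc ∫ x, |f (t + x) - f x|
      = ∫ x, (f x - f (t + x) + 2 * (Iic 0).indicator (fun y => f (t + y)) x) :=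
        integral_congr_ae (.of_forall (hf.abs_increment_eq ht))
    _ = (∫ x, f x) - (∫ x, f (t + x)) + 2 * ∫ x in Iic 0, f (t + x) := by
        rw [integral_add hdiff ((hshift.indicator measurableSet_Iic).const_mul 2),
          integral_sub hf.integrable hshift, integral_const_mul,
          integral_indicator measurableSet_Iic]
    _ = 2 * ∫ y in 0..t, f y := by
        rw [integral_add_left_eq_self f t, sub_self, zero_add, hmass]

lemma integral_abs_increment (hf : IsDecreasingDensity f) (t : ℝ) :
    ∫ x, |f (t + x) - f x| = 2 * ∫ y in 0..|t|, f y := by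
  rcases le_total 0 t with ht | ht
  · rw [abs_of_nonneg ht, hf.integral_abs_increment_of_nonneg ht]
  · rw [abs_of_nonpos ht, ← hf.integral_abs_increment_of_nonneg (neg_nonneg.2 ht),
      ← integral_add_left_eq_self (fun x => |f (-t + x) - f x|) t]
    simp only [neg_add_cancel_left, abs_sub_comm]

lemma integral_abs_movingAverage_sub_le (hf : IsDecreasingDensity f) (hε : 0 < ε) :
    ∫ x, |movingAverage ε f x - f x| ≤ 2 * ∫ y in 0..ε, f y := by
  refine integral_norm_movingAverage_sub_le_of_forall hε hf.integrable fun t ht => ?_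
  simp only [Real.norm_eq_abs]
  rw [hf.integral_abs_increment t]
  gcongr
  exact intervalIntegral.integral_mono_interval le_rfl (abs_nonneg t) (abs_le.2 ht)
    (.of_forall hf.nonneg) hf.integrable.intervalIntegrable

lemma le_movingAverage_of_mem_Ioc (hf : IsDecreasingDensity f) (hε : 0 < ε)
    (hx : x ∈ Ioc (-ε) 0) :
    (x + ε) * ((∫ y in 0..ε, f y) / (2 * ε ^ 2)) ≤ movingAverage ε f x := by
  have hpos : 0 < x + ε := by linarith [hx.1]
  have hmean : (x + ε) * ∫ y in 0..ε, f y ≤ ε * ∫ y in 0..(x + ε), f y :=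
    mul_integral_le_mul_integral_of_antitoneOn (hf.antitoneOn.mono Ioo_subset_Ioi_self)
      hf.integrable.intervalIntegrable hpos (by linarith [hx.2])
  have hcut : ∫ y in (x - ε)..(x + ε), f y = ∫ y in 0..(x + ε), f y := by
    rw [hf.intervalIntegral_eq_setIntegral_Iic (by linarith [hx.2]),
      hf.intervalIntegral_eq_setIntegral_Iic le_rfl]
  rw [movingAverage, hcut, smul_eq_mul]
  calc (x + ε) * ((∫ y in 0..ε, f y) / (2 * ε ^ 2))
      = ((x + ε) * ∫ y in 0..ε, f y) / (2 * ε ^ 2) := by ring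
    _ ≤ (ε * ∫ y in 0..(x + ε), f y) / (2 * ε ^ 2) := by gcongr
    _ = 1 / (2 * ε) * ∫ y in 0..(x + ε), f y := by field_simp

lemma le_integral_abs_movingAverage_sub (hf : IsDecreasingDensity f) (hε : 0 < ε) :
    1 / 4 * ∫ y in 0..ε, f y ≤ ∫ x, |movingAverage ε f x - f x| := by
  have hint : Integrable fun x => |movingAverage ε f x - f x| :=
    (integrable_movingAverage_sub hε hf.integrable).abs
  have hle : -ε ≤ 0 := neg_nonpos.2 hε.le
  have hpointwise : ∀ x ∈ Ioc (-ε) 0,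
      (x + ε) * ((∫ y in 0..ε, f y) / (2 * ε ^ 2)) ≤ |movingAverage ε f x - f x| := fun x hx => by
    rw [hf.eq_zero_of_nonpos x hx.2, sub_zero]
    exact (hf.le_movingAverage_of_mem_Ioc hε hx).trans (le_abs_self _)
  calc 1 / 4 * ∫ y in 0..ε, f y
      = ∫ x in Ioc (-ε) 0, (x + ε) * ((∫ y in 0..ε, f y) / (2 * ε ^ 2)) := by
        rw [← intervalIntegral.integral_of_le hle, intervalIntegral.integral_mul_const,
          intervalIntegral.integral_comp_add_right (fun s => s), integral_id]
        field_simp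
        ring
    _ ≤ ∫ x in Ioc (-ε) 0, |movingAverage ε f x - f x| :=
        setIntegral_mono_on (Continuous.integrableOn_Ioc (by fun_prop)) hint.integrableOn
          measurableSet_Ioc hpointwise
    _ ≤ ∫ x, |movingAverage ε f x - f x| :=
        setIntegral_le_integral hint (.of_forall fun _ => abs_nonneg _)

end IsDecreasingDensity

section TruncatedPower

variable {α : ℝ}

/-- The model power-law singularity: `x ^ (-α)` on `(0, 1]`, extended by `0`. -/
noncomputable def truncatedPower (α x : ℝ) : ℝ :=
  if 0 < x ∧ x ≤ 1 then x ^ (-α) else 0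

lemma truncatedPower_eq_indicator (α : ℝ) :
    truncatedPower α = (Ioc 0 1).indicator fun x => x ^ (-α) := by
  ext x
  simp only [truncatedPower, indicator, mem_Ioc]

lemma truncatedPower_nonneg (α x : ℝ) : 0 ≤ truncatedPower α x := by
  rw [truncatedPower_eq_indicator]
  exact indicator_nonneg (fun y hy => Real.rpow_nonneg hy.1.le _) x

lemma antitoneOn_truncatedPower (hα : 0 ≤ α) : AntitoneOn (truncatedPower α) (Ioi 0) := by
  intro x hx y hy hxy
  by_cases hy1 : y ≤ 1
  · rw [truncatedPower, truncatedPower, if_pos ⟨hy, hy1⟩, if_pos ⟨hx, hxy.trans hy1⟩]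
    exact Real.rpow_le_rpow_of_nonpos hx hxy (neg_nonpos.2 hα)
  · rw [truncatedPower, if_neg fun h => hy1 h.2]
    exact truncatedPower_nonneg α x

lemma integrable_truncatedPower (hα : α < 1) : Integrable (truncatedPower α) := by
  rw [truncatedPower_eq_indicator, integrable_indicator_iff measurableSet_Ioc,
    ← intervalIntegrable_iff_integrableOn_Ioc_of_le zero_le_one]
  exact intervalIntegral.intervalIntegrable_rpow' (neg_lt_neg hα)

lemma isDecreasingDensity_truncatedPower (hα : α ∈ Ico 0 1) :
    IsDecreasingDensity (truncatedPower α) where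
  integrable := integrable_truncatedPower hα.2
  nonneg := truncatedPower_nonneg α
  eq_zero_of_nonpos _ hx := if_neg fun h => hx.not_gt h.1
  antitoneOn := antitoneOn_truncatedPower hα.1

lemma integral_truncatedPower (hα : α < 1) {b : ℝ} (hb : b ∈ Icc 0 1) :
    ∫ y in 0..b, truncatedPower α y = b ^ (1 - α) / (1 - α) := by
  have hcongr : ∫ y in 0..b, truncatedPower α y = ∫ y in 0..b, y ^ (-α) := by
    refine intervalIntegral.integral_congr_uIoo fun y hy => ?_
    rw [uIoo_of_le hb.1] at hy
    exact if_pos ⟨hy.1, hy.2.le.trans hb.2⟩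
  rw [hcongr, integral_rpow (Or.inl (neg_lt_neg hα)), neg_add_eq_sub,
    Real.zero_rpow (sub_pos.2 hα).ne', sub_zero]

end TruncatedPower

theorem stmt17_general {f : ℝ → ℝ} (hf : IsDecreasingDensity f) {ε : ℝ} (hε : 0 < ε) :
    1 / 4 * (∫ y in 0..ε, f y) ≤ ∫ x, |movingAverage ε f x - f x| ∧
      ∫ x, |movingAverage ε f x - f x| ≤ 2 * ∫ y in 0..ε, f y :=
  ⟨hf.le_integral_abs_movingAverage_sub hε, hf.integral_abs_movingAverage_sub_le hε⟩

/-- Mollifying a power-law singularity: for `h(x) = x^{−α}` on `(0,1]` (and `0`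
elsewhere) with `α ∈ (0,1)`, the averaging operator `G_ε` satisfies
`‖G_ε h − h‖_{L¹(ℝ)} ∼ ε^{1−α}` as `ε → 0⁺`. -/
theorem stmt17 (α : ℝ) (hα : α ∈ Set.Ioo (0:ℝ) 1)
    (h : ℝ → ℝ) (hh : ∀ x : ℝ, h x = if 0 < x ∧ x ≤ 1 then x^(-α) else 0) :
    ∃ c₁ > (0:ℝ), ∃ c₂ > (0:ℝ), ∃ ε₀ > (0:ℝ), ∀ ε ∈ Set.Ioo (0:ℝ) ε₀,
      c₁ * ε^(1-α) ≤ (∫ x : ℝ, |((1/(2*ε)) * ∫ y in (x-ε)..(x+ε), h y) - h x|) ∧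
      (∫ x : ℝ, |((1/(2*ε)) * ∫ y in (x-ε)..(x+ε), h y) - h x|) ≤ c₂ * ε^(1-α) := by
  obtain rfl : h = truncatedPower α := funext hh
  have hα' : 0 < 1 - α := sub_pos.2 hα.2
  refine ⟨1 / 4 * (1 - α)⁻¹, by positivity, 2 * (1 - α)⁻¹, by positivity, 1, one_pos,
    fun ε hε => ?_⟩
  rw [mul_assoc, mul_assoc, ← div_eq_inv_mul,
    ← integral_truncatedPower hα.2 (Ioo_subset_Icc_self hε)]
  exact stmt17_general (isDecreasingDensity_truncatedPower (Ioo_subset_Ico_self hα)) hε.1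
end
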